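/- Let N ≥ 1, let σ_1,…,σ_N be class-K∞ functions and μ_1,…,μ_N > 0. Define σ(s) := min{ Σ_{i=1}^N μ_i σ_i(s_i) : s_1,…,s_N ≥ 0, Σ_{i=1}^N μ_i s_i = s } for s ≥ 0. Then the minimum is attained for every s ≥ 0 and σ is a class-K∞ function; in particular, for all s_1,…,s_N ≥ 0 one has σ(Σ_{i=1}^N μ_i s_i) ≤ Σ_{i=1}^N μ_i σ_i(s_i). -/

import Mathlib

/-!
The constraint set `{x ≥ 0 | ∑ μᵢ xᵢ = s}` is compact and, for `s ≥ 0`, equal to `s` times the one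
for `s = 1`. Compactness gives the minimizers, and rescaling turns `σ(s)` into the minimum of
`∑ μᵢ σᵢ(s xᵢ)` over a fixed compact set, which is continuous in `s`. Scaling a minimizer for `b`
down by `a / b < 1` gives an admissible point for `a` of strictly smaller cost, so `σ` is strictly
increasing. Finally, if `s ≥ R ∑ μᵢ` then some `xᵢ ≥ R`, so the cost is large when `R` is.
-/

open Filter

/-- A class-K function: continuous, strictly increasing on `[0,∞)`, and vanishing at `0`. -/
def ClassK (f : ℝ → ℝ) : Prop :=
  ContinuousOn f (Set.Ici 0) ∧ StrictMonoOn f (Set.Ici 0) ∧ f 0 = 0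

/-- A class-K∞ function: a class-K function that is unbounded. -/
def ClassKInf (f : ℝ → ℝ) : Prop :=
  ClassK f ∧ Tendsto f atTop atTop

lemma ClassK.nonneg {f : ℝ → ℝ} (hf : ClassK f) {x : ℝ} (hx : 0 ≤ x) : 0 ≤ f x :=
  hf.2.2.symm.trans_le (hf.2.1.monotoneOn Set.self_mem_Ici hx hx)

section WeightedInfConv

open scoped Pointwise

variable {ι : Type*} [Fintype ι] {σ : ι → ℝ → ℝ} {μ : ι → ℝ} {s : ℝ} {x : ι → ℝ}

/-- The simplex of nonnegative vectors whose `μ`-weighted sum is `s`: the constraint set of the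
minimization problem. -/
def weightedSimplex (μ : ι → ℝ) (s : ℝ) : Set (ι → ℝ) :=
  {x | 0 ≤ x ∧ ∑ i, μ i * x i = s}

/-- The objective `∑ μᵢ σᵢ(xᵢ)` of the minimization problem. -/
def weightedCost (σ : ι → ℝ → ℝ) (μ x : ι → ℝ) : ℝ :=
  ∑ i, μ i * σ i (x i)

/-- The `μ`-weighted infimal convolution of the functions `σᵢ` on `[0,∞)`, which is `σ(s)` in the
informal statement. It takes the junk value `sInf ∅ = 0` where the constraint set is empty. -/
noncomputable def weightedInfConv (σ : ι → ℝ → ℝ) (μ : ι → ℝ) (s : ℝ) : ℝ :=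
  sInf (weightedCost σ μ '' weightedSimplex μ s)

lemma isCompact_weightedSimplex (hμ : ∀ i, 0 < μ i) (s : ℝ) :
    IsCompact (weightedSimplex μ s) := by
  have hclosed : IsClosed (weightedSimplex μ s) :=
    isClosed_Ici.inter (isClosed_eq (by fun_prop) continuous_const)
  refine (isCompact_Icc (a := 0) (b := fun i => s / μ i)).of_isClosed_subset hclosed ?_
  rintro x ⟨hx, rfl⟩
  refine ⟨hx, fun i => (le_div_iff₀' (hμ i)).2 ?_⟩
  exact Finset.single_le_sum (f := fun j => μ j * x j)
    (fun j _ => mul_nonneg (hμ j).le (hx j)) (Finset.mem_univ i)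

lemma weightedSimplex_nonempty [Nonempty ι] (hμ : ∀ i, 0 < μ i) (hs : 0 ≤ s) :
    (weightedSimplex μ s).Nonempty := by
  have hsum : 0 < ∑ i, μ i := Finset.sum_pos (fun i _ => hμ i) Finset.univ_nonempty
  refine ⟨fun _ => s / ∑ i, μ i, fun _ => div_nonneg hs hsum.le, ?_⟩
  rw [← Finset.sum_mul, mul_div_cancel₀ _ hsum.ne']

lemma weightedSimplex_zero (hμ : ∀ i, 0 < μ i) : weightedSimplex μ 0 = {0} := by
  refine Set.Subset.antisymm (fun x ⟨hx, hsum⟩ => funext fun i => ?_) (by simp [weightedSimplex])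
  have hzero := (Finset.sum_eq_zero_iff_of_nonneg
    fun j _ => mul_nonneg (hμ j).le (hx j)).1 hsum i (Finset.mem_univ i)
  exact (mul_eq_zero.1 hzero).resolve_left (hμ i).ne'

lemma smul_mem_weightedSimplex {c : ℝ} (hc : 0 ≤ c) (hx : x ∈ weightedSimplex μ s) :
    c • x ∈ weightedSimplex μ (c * s) := by
  refine ⟨smul_nonneg hc hx.1, ?_⟩
  simp only [← hx.2, Pi.smul_apply, smul_eq_mul, Finset.mul_sum, mul_left_comm]

lemma weightedSimplex_eq_smul [Nonempty ι] (hμ : ∀ i, 0 < μ i) (hs : 0 ≤ s) :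
    weightedSimplex μ s = s • weightedSimplex μ 1 := by
  rcases hs.eq_or_lt with rfl | hpos
  · rw [weightedSimplex_zero hμ, Set.zero_smul_set (weightedSimplex_nonempty hμ zero_le_one),
      Set.singleton_zero]
  · refine Set.Subset.antisymm (fun x hx => ?_) (Set.smul_set_subset_iff.2 fun x hx => ?_)
    · rw [Set.mem_smul_set_iff_inv_smul_mem₀ hpos.ne', ← inv_mul_cancel₀ hpos.ne']
      exact smul_mem_weightedSimplex (inv_nonneg.2 hs) hx
    · simpa only [mul_one] using smul_mem_weightedSimplex hs hx

lemma continuousOn_weightedCost (hσ : ∀ i, ContinuousOn (σ i) (Set.Ici 0)) :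
    ContinuousOn (weightedCost σ μ) (Set.Ici 0) :=
  continuousOn_finsetSum _ fun i _ => continuousOn_const.mul <|
    (hσ i).comp (continuous_apply i).continuousOn fun _ hx => hx i

lemma strictMonoOn_weightedCost (hσ : ∀ i, StrictMonoOn (σ i) (Set.Ici 0))
    (hμ : ∀ i, 0 < μ i) : StrictMonoOn (weightedCost σ μ) (Set.Ici 0) := by
  intro x hx y hy hxy
  obtain ⟨hle, i, hi⟩ := Pi.lt_def.1 hxy
  refine Finset.sum_lt_sum (fun j _ => ?_) ⟨i, Finset.mem_univ i, ?_⟩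
  · exact mul_le_mul_of_nonneg_left ((hσ j).monotoneOn (hx j) (hy j) (hle j)) (hμ j).le
  · exact mul_lt_mul_of_pos_left (hσ i (hx i) (hy i) hi) (hμ i)

lemma isLeast_weightedInfConv [Nonempty ι] (hσ : ∀ i, ContinuousOn (σ i) (Set.Ici 0))
    (hμ : ∀ i, 0 < μ i) (hs : 0 ≤ s) :
    IsLeast (weightedCost σ μ '' weightedSimplex μ s) (weightedInfConv σ μ s) :=
  ((isCompact_weightedSimplex hμ s).image_of_continuousOn
    ((continuousOn_weightedCost hσ).mono fun _ hx => hx.1)).isLeast_sInf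
    ((weightedSimplex_nonempty hμ hs).image _)

lemma weightedInfConv_sum_le [Nonempty ι] (hσ : ∀ i, ContinuousOn (σ i) (Set.Ici 0))
    (hμ : ∀ i, 0 < μ i) (hx : 0 ≤ x) :
    weightedInfConv σ μ (∑ i, μ i * x i) ≤ weightedCost σ μ x :=
  (isLeast_weightedInfConv hσ hμ (Finset.sum_nonneg fun i _ => mul_nonneg (hμ i).le (hx i))).2
    ⟨x, ⟨hx, rfl⟩, rfl⟩

lemma weightedInfConv_zero (hσ : ∀ i, σ i 0 = 0) (hμ : ∀ i, 0 < μ i) :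
    weightedInfConv σ μ 0 = 0 := by
  simp [weightedInfConv, weightedSimplex_zero hμ, weightedCost, hσ]

lemma weightedInfConv_congr {τ : ι → ℝ → ℝ} (h : ∀ i, Set.EqOn (σ i) (τ i) (Set.Ici 0)) :
    weightedInfConv σ μ = weightedInfConv τ μ := by
  funext s
  refine congrArg sInf (Set.image_congr fun x hx => Finset.sum_congr rfl fun i _ => ?_)
  rw [h i (hx.1 i)]

lemma continuousOn_weightedInfConv_of_continuous [Nonempty ι] (hσ : ∀ i, Continuous (σ i))
    (hμ : ∀ i, 0 < μ i) : ContinuousOn (weightedInfConv σ μ) (Set.Ici 0) := by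
  have hcost : Continuous fun p : ℝ × (ι → ℝ) => weightedCost σ μ (p.1 • p.2) := by
    unfold weightedCost
    fun_prop
  have hmin : Continuous fun s : ℝ => sInf ((fun x => weightedCost σ μ (s • x)) ''
      weightedSimplex μ 1) := (isCompact_weightedSimplex hμ 1).continuous_sInf hcost
  refine hmin.continuousOn.congr fun s hs => ?_
  rw [weightedInfConv, weightedSimplex_eq_smul hμ hs, ← Set.image_smul, Set.image_image]

lemma continuousOn_weightedInfConv [Nonempty ι] (hσ : ∀ i, ContinuousOn (σ i) (Set.Ici 0))
    (hμ : ∀ i, 0 < μ i) : ContinuousOn (weightedInfConv σ μ) (Set.Ici 0) := by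
  have hext : ∀ i, Set.EqOn (σ i) (fun r => σ i (max r 0)) (Set.Ici 0) := fun i r hr =>
    congrArg (σ i) (max_eq_left hr).symm
  rw [weightedInfConv_congr hext]
  exact continuousOn_weightedInfConv_of_continuous
    (fun i => (hσ i).comp_continuous (by fun_prop) fun r => le_max_right r 0) hμ

lemma strictMonoOn_weightedInfConv [Nonempty ι] (hcont : ∀ i, ContinuousOn (σ i) (Set.Ici 0))
    (hmono : ∀ i, StrictMonoOn (σ i) (Set.Ici 0)) (hμ : ∀ i, 0 < μ i) :
    StrictMonoOn (weightedInfConv σ μ) (Set.Ici 0) := by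
  intro a (ha : 0 ≤ a) b (hb : 0 ≤ b) hab
  have hbpos : 0 < b := ha.trans_lt hab
  obtain ⟨x, hx, hxb⟩ := (isLeast_weightedInfConv hcont hμ hb).1
  have hxpos : 0 < x := hx.1.lt_of_ne' fun h => hbpos.ne' <| by simp [← hx.2, h]
  have hc : 0 ≤ a / b := div_nonneg ha hb
  have hcx : (a / b) • x ∈ weightedSimplex μ a := by
    simpa only [div_mul_cancel₀ a hbpos.ne'] using smul_mem_weightedSimplex hc hx
  have hlt : (a / b) • x < x := by
    simpa only [one_smul] using smul_lt_smul_of_pos_right ((div_lt_one hbpos).2 hab) hxpos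
  calc weightedInfConv σ μ a
      ≤ weightedCost σ μ ((a / b) • x) :=
        (isLeast_weightedInfConv hcont hμ ha).2 (Set.mem_image_of_mem _ hcx)
    _ < weightedCost σ μ x := strictMonoOn_weightedCost hmono hμ hcx.1 hx.1 hlt
    _ = weightedInfConv σ μ b := hxb

lemma exists_le_of_mul_sum_le [Nonempty ι] (hμ : ∀ i, 0 < μ i) {R : ℝ}
    (h : R * ∑ i, μ i ≤ ∑ i, μ i * x i) : ∃ i, R ≤ x i := by
  rw [mul_comm, Finset.sum_mul] at h
  obtain ⟨i, -, hi⟩ := Finset.exists_le_of_sum_le Finset.univ_nonempty h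
  exact ⟨i, le_of_mul_le_mul_left hi (hμ i)⟩

lemma tendsto_weightedInfConv_atTop [Nonempty ι] (hnonneg : ∀ i, ∀ r, 0 ≤ r → 0 ≤ σ i r)
    (hσ : ∀ i, Tendsto (σ i) atTop atTop) (hμ : ∀ i, 0 < μ i) :
    Tendsto (weightedInfConv σ μ) atTop atTop := by
  refine tendsto_atTop.2 fun C => ?_
  obtain ⟨R, hR⟩ : ∃ R, ∀ r ≥ R, ∀ i, C ≤ μ i * σ i r := eventually_atTop.1 <|
    eventually_all.2 fun i => ((hσ i).const_mul_atTop (hμ i)).eventually_ge_atTop C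
  filter_upwards [eventually_ge_atTop 0, eventually_ge_atTop (R * ∑ i, μ i)] with s hs hRs
  refine le_csInf ((weightedSimplex_nonempty hμ hs).image _) ?_
  rintro _ ⟨x, ⟨hx, rfl⟩, rfl⟩
  obtain ⟨i, hi⟩ := exists_le_of_mul_sum_le hμ hRs
  calc C ≤ μ i * σ i (x i) := hR _ hi i
    _ ≤ weightedCost σ μ x := Finset.single_le_sum (f := fun j => μ j * σ j (x j))
        (fun j _ => mul_nonneg (hμ j).le (hnonneg j _ (hx j))) (Finset.mem_univ i)

lemma classK_weightedInfConv [Nonempty ι] (hσ : ∀ i, ClassK (σ i)) (hμ : ∀ i, 0 < μ i) :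
    ClassK (weightedInfConv σ μ) :=
  ⟨continuousOn_weightedInfConv (fun i => (hσ i).1) hμ,
    strictMonoOn_weightedInfConv (fun i => (hσ i).1) (fun i => (hσ i).2.1) hμ,
    weightedInfConv_zero (fun i => (hσ i).2.2) hμ⟩

lemma classKInf_weightedInfConv [Nonempty ι] (hσ : ∀ i, ClassKInf (σ i)) (hμ : ∀ i, 0 < μ i) :
    ClassKInf (weightedInfConv σ μ) :=
  ⟨classK_weightedInfConv (fun i => (hσ i).1) hμ,
    tendsto_weightedInfConv_atTop (fun i _ => (hσ i).1.nonneg) (fun i => (hσ i).2) hμ⟩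

end WeightedInfConv

theorem stmt_7_general {ι : Type*} [Fintype ι] [Nonempty ι] {σ : ι → ℝ → ℝ} {μ : ι → ℝ}
    (hσ : ∀ i, ClassKInf (σ i)) (hμ : ∀ i, 0 < μ i) {A : ℝ → Set ℝ}
    (hA : ∀ s, A s = {v : ℝ | ∃ x : ι → ℝ,
      (∀ i, 0 ≤ x i) ∧ (∑ i, μ i * x i) = s ∧ v = ∑ i, μ i * σ i (x i)})
    {σc : ℝ → ℝ} (hσc : ∀ s, σc s = sInf (A s)) :
    (∀ s ≥ (0 : ℝ), ∃ v ∈ A s, ∀ v' ∈ A s, v ≤ v') ∧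
    ClassKInf σc ∧
    (∀ x : ι → ℝ, (∀ i, 0 ≤ x i) →
      σc (∑ i, μ i * x i) ≤ ∑ i, μ i * σ i (x i)) := by
  obtain rfl : A = fun s => weightedCost σ μ '' weightedSimplex μ s := by
    ext s v
    simp only [hA, weightedSimplex, weightedCost, Pi.le_def, Pi.zero_apply, Set.mem_image,
      Set.mem_ofPred_eq, and_assoc, eq_comm (a := v)]
  obtain rfl : σc = weightedInfConv σ μ := funext hσc
  have hcont : ∀ i, ContinuousOn (σ i) (Set.Ici 0) := fun i => (hσ i).1.1
  exact ⟨fun s hs => ⟨_, isLeast_weightedInfConv hcont hμ hs⟩, classKInf_weightedInfConv hσ hμ,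
    fun x hx => weightedInfConv_sum_le hcont hμ hx⟩

/-- Let `σ₁,…,σ_N` be class-K∞ and `μᵢ > 0`, and define
`σ(s) = min { ∑ μᵢ σᵢ(sᵢ) : sᵢ ≥ 0, ∑ μᵢ sᵢ = s }`. Then the minimum is attained for every
`s ≥ 0`, `σ` is class-K∞, and `σ(∑ μᵢ sᵢ) ≤ ∑ μᵢ σᵢ(sᵢ)` for all `sᵢ ≥ 0`. -/
theorem stmt_7
    (N : ℕ) (hN : 1 ≤ N)
    (σ : Fin N → ℝ → ℝ) (μ : Fin N → ℝ)
    (hσ : ∀ i, ClassKInf (σ i)) (hμ : ∀ i, 0 < μ i)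
    (A : ℝ → Set ℝ)
    (hA : ∀ s, A s = {v : ℝ | ∃ sv : Fin N → ℝ,
      (∀ i, 0 ≤ sv i) ∧ (∑ i, μ i * sv i) = s ∧ v = ∑ i, μ i * σ i (sv i)})
    (σc : ℝ → ℝ) (hσc : ∀ s, σc s = sInf (A s)) :
    (∀ s ≥ (0:ℝ), ∃ v ∈ A s, ∀ v' ∈ A s, v ≤ v') ∧
    ClassKInf σc ∧
    (∀ sv : Fin N → ℝ, (∀ i, 0 ≤ sv i) →
      σc (∑ i, μ i * sv i) ≤ ∑ i, μ i * σ i (sv i)) := by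
  have : Nonempty (Fin N) := ⟨⟨0, hN⟩⟩
  exact stmt_7_general hσ hμ hA hσc
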